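/- Let n ≥ 2, let π/2 < D < π, and let C ⊆ S^n be a solid D-maximal set. Let x, y ∈ ∂C with x ≠ y be strongly regular boundary points, and let N_x and N_y be exterior unit normals of C at x and at y respectively. Then there exist η ∈ {−1,1} and λ ∈ ℝ such that N_x − η·N_y = λ·(x − y) in ℝ^{n+1}. -/

import Mathlib

/-!
The proof uses two-point symmetrization (polarization). Let `ρ` be the reflection in the linear
hyperplane orthogonal to `x - y`, which swaps `x` and `y`. Since `ρ N_y` differs from `N_y` by a
multiple of `x - y`, it is enough to show `N_x = ± ρ N_y`.

A point of a volume maximizer that is not interior has a point of the maximizer at distance exactly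
`D`, because otherwise a small ball around it could be added, gaining volume. If moreover a set of
diameter at most `D` contains a ball touching its boundary at `p` with exterior normal `N`, the only
point of the set at distance `D` from `p` is `cos D • p - sin D • N`: for any other such point some
curve starting at `p` enters the touching ball while moving away from it.

Suppose `N_x ≠ -ρ N_y`, and let `T` be the polarization of `C` towards the side of `x`. It contains
`x` and `y`, and it is again `D`-maximal. The sets `C` and `ρ C` lie in the balls of radius `D`
around `cos D • x - sin D • N_x` and `cos D • x - sin D • ρ N_y`, and the direction `N_x + ρ N_y`
leaves both balls at `x`; so `x` is not interior to `T ⊆ C ∪ ρ C`. Hence there is `w ∈ T` at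
distance `D` from `x`. As `w` is at distance at most `D` from `y ∈ T`, it lies on the side of `y`,
where `T` is `C ∩ ρ C`. Thus `w` and `ρ w` belong to `C` and have distance `D` from `x` and `y`
respectively, and uniqueness at both points gives `N_x = ρ N_y`.
-/

open MeasureTheory

noncomputable section

/-- Euclidean space `ℝ^{n+1}`. -/
abbrev Esp (n : ℕ) : Type := EuclideanSpace ℝ (Fin (n + 1))

/-- The unit sphere `S^n ⊆ ℝ^{n+1}`, as a subtype. -/
abbrev Sph (n : ℕ) : Type := Metric.sphere (0 : Esp n) 1

/-- Geodesic distance `d(x,y) = arccos ⟨x,y⟩` on the sphere. -/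
def gd {n : ℕ} (x y : Sph n) : ℝ :=
  Real.arccos (inner (𝕜 := ℝ) (x : Esp n) (y : Esp n))

/-- Closed geodesic ball `B(z,r) = {x ∈ Sⁿ : d(x,z) ≤ r}`. -/
def sphBall {n : ℕ} (z : Sph n) (r : ℝ) : Set (Sph n) := {x | gd x z ≤ r}

/-- Geodesic diameter `diam X = sup {d(x,y) : x, y ∈ X}`. -/
def sphDiam {n : ℕ} (X : Set (Sph n)) : ℝ :=
  sSup {r | ∃ x ∈ X, ∃ y ∈ X, r = gd x y}

/-- Spherical volume: the `n`-dimensional (Hausdorff) surface measure on `S^n`. -/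
def sphVol (n : ℕ) : Measure (Sph n) := μH[(n : ℝ)]

/-- A set `C ⊆ S^n` is `D`-maximal: compact, of geodesic diameter at most `D`, and of
maximal spherical volume among compact sets of diameter at most `D`. -/
def DMaximal (n : ℕ) (D : ℝ) (C : Set (Sph n)) : Prop :=
  IsCompact C ∧ sphDiam C ≤ D ∧
    sphVol n C =
      sSup {v | ∃ X : Set (Sph n), IsCompact X ∧ sphDiam X ≤ D ∧ v = sphVol n X}

/-- A nonempty compact set `C ⊆ S^n`, `C ≠ S^n`, is solid if it equals the closure
of its interior (in the topology of `S^n`). -/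
def Solid {n : ℕ} (C : Set (Sph n)) : Prop :=
  C.Nonempty ∧ IsCompact C ∧ C ≠ Set.univ ∧ C = closure (interior C)

/-- `x` is a strongly regular boundary point of `C`: `x ∈ ∂C` and there are `r > 0`
and `z ∈ C` with `B(z,r) ⊆ C` and `d(x,z) = r`. -/
def StronglyRegular {n : ℕ} (C : Set (Sph n)) (x : Sph n) : Prop :=
  x ∈ frontier C ∧ ∃ r > 0, ∃ z ∈ C, sphBall z r ⊆ C ∧ gd x z = r

/-- `N` is an exterior unit normal of `C` at `x`: `‖N‖ = 1`, `⟨N,x⟩ = 0`, and there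
are strong-regularity witnesses `r > 0`, `z ∈ C` with `B(z,r) ⊆ C`, `d(x,z) = r` and
`z = (cos r) • x − (sin r) • N`. -/
def ExtUnitNormal {n : ℕ} (C : Set (Sph n)) (x : Sph n) (N : Esp n) : Prop :=
  ‖N‖ = 1 ∧ inner (𝕜 := ℝ) N (x : Esp n) = 0 ∧
    ∃ r > 0, ∃ z ∈ C, sphBall z r ⊆ C ∧ gd x z = r ∧
      (z : Esp n) = Real.cos r • (x : Esp n) - Real.sin r • N

open Filter Topology Metric Module
open scoped RealInnerProductSpace

section UnitSphere

variable {E : Type*} [NormedAddCommGroup E] [InnerProductSpace ℝ E]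

section SurfaceMeasure

variable [MeasurableSpace E] [BorelSpace E] {n : ℕ} [Fact (finrank ℝ E = n + 1)]

lemma isAddHaarMeasure_hausdorffMeasure_orthogonal (v : sphere (0 : E) 1) :
    (μH[n] : Measure (ℝ ∙ (v : E))ᗮ).IsAddHaarMeasure := by
  have : FiniteDimensional ℝ E := .of_fact_finrank_eq_succ n
  have h : finrank ℝ (ℝ ∙ (v : E))ᗮ = n :=
    Submodule.finrank_orthogonal_span_singleton (ne_zero_of_mem_unit_sphere v)
  exact h ▸ isAddHaarMeasure_hausdorffMeasure

lemma isOpenPosMeasure_hausdorffMeasure_sphere :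
    (μH[n] : Measure (sphere (0 : E) 1)).IsOpenPosMeasure := by
  refine ⟨fun U hU ⟨a, ha⟩ hU0 => ?_⟩
  have := isAddHaarMeasure_hausdorffMeasure_orthogonal (n := n) (-a)
  set φ := stereographic (norm_eq_of_mem_sphere (-a))
  have hsmooth : ContDiffAt ℝ 1 (stereoToFun ((-a : sphere (0 : E) 1) : E)) a :=
    contDiffOn_stereoToFun.contDiffAt <|
      (isOpen_ne_fun (by fun_prop) continuous_const).mem_nhds (by norm_num)
  obtain ⟨K, t, ht, hK⟩ := hsmooth.exists_lipschitzOnWith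
  set s : Set (sphere (0 : E) 1) := U ∩ (↑) ⁻¹' t
  have hs : s ∈ 𝓝 a :=
    inter_mem (hU.mem_nhds ha) (continuous_subtype_val.continuousAt.preimage_mem_nhds ht)
  have hφs : LipschitzOnWith K φ s := fun p hp q hq => hK hp.2 hq.2
  have hpos : 0 < μH[n] (φ '' s) :=
    Measure.measure_pos_of_mem_nhds _ (φ.image_mem_nhds (ne_neg_of_mem_unit_sphere ℝ a) hs)
  have hle := hφs.hausdorffMeasure_image_le (Nat.cast_nonneg n)
  rw [measure_mono_null Set.inter_subset_left hU0, mul_zero] at hle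
  exact hpos.not_ge hle

lemma isFiniteMeasure_hausdorffMeasure_sphere :
    IsFiniteMeasure (μH[n] : Measure (sphere (0 : E) 1)) := by
  have : FiniteDimensional ℝ E := .of_fact_finrank_eq_succ n
  suffices IsLocallyFiniteMeasure (μH[n] : Measure (sphere (0 : E) 1)) from inferInstance
  refine ⟨fun a => ?_⟩
  have := isAddHaarMeasure_hausdorffMeasure_orthogonal (n := n) (-a)
  set φ := stereographic (norm_eq_of_mem_sphere (-a))
  have hsmooth : ContDiff ℝ 1 fun v : (ℝ ∙ ((-a : sphere (0 : E) 1) : E))ᗮ => (φ.symm v : E) :=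
    contDiff_stereoInvFunAux.comp (ℝ ∙ ((-a : sphere (0 : E) 1) : E))ᗮ.subtypeL.contDiff
  obtain ⟨K, t, ht, hK⟩ := hsmooth.locallyLipschitz (φ a)
  set s := t ∩ closedBall (φ a) 1
  have hφs : LipschitzOnWith K φ.symm s := hK.mono Set.inter_subset_left
  refine ⟨φ.symm '' s, ?_, ?_⟩
  · have ha : a ∈ φ.source := ne_neg_of_mem_unit_sphere ℝ a
    have := φ.symm.image_mem_nhds (φ.map_source ha)
      (inter_mem ht (closedBall_mem_nhds (φ a) one_pos))
    rwa [φ.left_inv ha] at this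
  · calc μH[n] (φ.symm '' s) ≤ (K : ENNReal) ^ (n : ℝ) * μH[n] s :=
          hφs.hausdorffMeasure_image_le (Nat.cast_nonneg n)
      _ < ⊤ := ENNReal.mul_lt_top (by simp) <|
          (measure_mono Set.inter_subset_right).trans_lt measure_closedBall_lt_top

end SurfaceMeasure

lemma exists_curve_inner_lt (x : sphere (0 : E) 1) {v : E} (hv : ⟪v, x⟫ = 0) :
    ∃ γ : ℝ → sphere (0 : E) 1, Tendsto γ (𝓝[>] 0) (𝓝 x) ∧
      ∀ w : E, ⟪v, w⟫ < 0 → ∀ᶠ t in 𝓝[>] 0, ⟪(γ t : E), w⟫ < ⟪(x : E), w⟫ := by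
  have hx : ‖-(x : E)‖ = 1 := by simp
  lift v to (ℝ ∙ -(x : E))ᗮ using by
    rw [Submodule.mem_orthogonal_singleton_iff_inner_left]; simpa using hv
  set γ : ℝ → sphere (0 : E) 1 := fun t => stereoInvFun hx (t • v)
  have hγ0 : γ 0 = x := by
    ext
    simp [γ, stereoInvFun, stereoInvFunAux]
  have hγ : HasDerivAt (fun t => (γ t : E)) v 0 := by
    have hline : HasDerivAt (fun t : ℝ => t • v) v 0 := by
      simpa using (hasDerivAt_id (0 : ℝ)).smul_const v
    have hstereo := hasFDerivAt_stereoInvFunAux_comp_coe (-(x : E))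
    rw [← zero_smul ℝ v] at hstereo
    exact hstereo.comp_hasDerivAt 0 hline
  refine ⟨γ, ?_, fun w hw => ?_⟩
  · have hcont : Continuous γ := (continuous_stereoInvFun hx).comp (by fun_prop)
    exact hγ0 ▸ (hcont.tendsto 0).mono_left nhdsWithin_le_nhds
  · have hd : HasDerivAt (fun t => ⟪(γ t : E), w⟫) ⟪(v : E), w⟫ 0 := by
      simpa using hγ.inner ℝ (hasDerivAt_const 0 w)
    filter_upwards [hd.tendsto_slope_zero_right.eventually_lt_const hw, self_mem_nhdsWithin]
      with t ht (ht0 : 0 < t)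
    rw [smul_eq_mul, inv_mul_lt_iff₀ ht0] at ht
    simpa [hγ0] using ht

lemma notMem_interior_of_forall_exists_le {x : sphere (0 : E) 1} {v : E} (hxv : ⟪v, x⟫ = 0)
    {W : Set E} (hW : W.Finite) (hvW : ∀ w ∈ W, ⟪v, w⟫ < 0) {Y : Set (sphere (0 : E) 1)}
    (hY : ∀ p ∈ Y, ∃ w ∈ W, ⟪(x : E), w⟫ ≤ ⟪(p : E), w⟫) : x ∉ interior Y := by
  intro hx
  obtain ⟨γ, hγ, hlt⟩ := exists_curve_inner_lt x hxv
  have hγY : ∀ᶠ t in 𝓝[>] 0, γ t ∈ Y := hγ (mem_interior_iff_mem_nhds.mp hx)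
  have hγW : ∀ᶠ t in 𝓝[>] 0, ∀ w ∈ W, ⟪(γ t : E), w⟫ < ⟪(x : E), w⟫ :=
    (eventually_all_finite hW).mpr fun w hw => hlt w (hvW w hw)
  obtain ⟨t, htY, htW⟩ := (hγY.and hγW).exists
  obtain ⟨w, hw, hle⟩ := hY _ htY
  exact (htW w hw).not_ge hle

/-- The point of the unit sphere at geodesic distance `r` from the point `x`, on the great circle
leaving `x` in the direction `-N`, for a unit vector `N ⟂ x`. It is the centre of the ball of radius
`r` whose boundary passes through `x` with exterior normal `N`. -/
def inwardPoint (x N : E) (r : ℝ) : E := Real.cos r • x - Real.sin r • N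

lemma inner_inwardPoint_of_inner_eq_zero {x v : E} (h : ⟪v, x⟫ = 0) (N : E) (r : ℝ) :
    ⟪v, inwardPoint x N r⟫ = -(Real.sin r * ⟪v, N⟫) := by
  simp [inwardPoint, inner_sub_right, inner_smul_right, h]

lemma inner_inwardPoint_neg {x v N : E} {r : ℝ} (h : ⟪v, x⟫ = 0) (hr : 0 < Real.sin r)
    (hN : 0 < ⟪v, N⟫) : ⟪v, inwardPoint x N r⟫ < 0 := by
  rw [inner_inwardPoint_of_inner_eq_zero h]
  exact neg_neg_of_pos (mul_pos hr hN)

lemma inner_inwardPoint_self {x : E} (hx : ‖x‖ = 1) {N : E} (h : ⟪N, x⟫ = 0) (r : ℝ) :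
    ⟪x, inwardPoint x N r⟫ = Real.cos r := by
  simp [inwardPoint, inner_sub_right, inner_smul_right, real_inner_comm N, h, hx]

lemma inwardPoint_injective (x : E) {r : ℝ} (hr : Real.sin r ≠ 0) :
    Function.Injective fun N => inwardPoint x N r := fun _ _ h =>
  smul_right_injective E hr (sub_right_injective h)

lemma exists_eq_inwardPoint {x w : E} (hx : ‖x‖ = 1) (hw : ‖w‖ = 1) {r : ℝ}
    (hr : Real.sin r ≠ 0) (hxw : ⟪x, w⟫ = Real.cos r) :
    ∃ N : E, ‖N‖ = 1 ∧ ⟪N, x⟫ = 0 ∧ w = inwardPoint x N r := by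
  have hq : ‖Real.cos r • x - w‖ ^ 2 = Real.sin r ^ 2 := by
    rw [norm_sub_sq_real, norm_smul, real_inner_smul_left, hxw, hx, hw, Real.sin_sq,
      Real.norm_eq_abs, mul_one, sq_abs]
    ring
  refine ⟨(Real.sin r)⁻¹ • (Real.cos r • x - w), ?_, ?_, ?_⟩
  · rw [← sq_eq_sq₀ (norm_nonneg _) zero_le_one, norm_smul, mul_pow, hq, norm_inv, inv_pow,
      Real.norm_eq_abs, sq_abs, inv_mul_cancel₀ (pow_ne_zero 2 hr), one_pow]
  · rw [real_inner_comm]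
    simp [inner_smul_right, inner_sub_right, hxw, hx]
  · simp [inwardPoint, smul_inv_smul₀ hr]

lemma map_inwardPoint {F : Type*} [NormedAddCommGroup F] [InnerProductSpace ℝ F] (f : E →ₗ[ℝ] F)
    (x N : E) (r : ℝ) : f (inwardPoint x N r) = inwardPoint (f x) (f N) r := by
  simp [inwardPoint]

lemma reflection_orthogonal_singleton_apply (u v : E) :
    (ℝ ∙ u)ᗮ.reflection v = v - (2 * (⟪u, v⟫ / ‖u‖ ^ 2)) • u := by
  rw [Submodule.reflection_orthogonal_apply, Submodule.reflection_singleton_apply, neg_sub,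
    two_smul, two_mul, add_smul]
  rfl

/-- The reflection of the unit sphere in the hyperplane orthogonal to `u` (the identity if
`u = 0`). -/
def sphereReflection (u : E) : sphere (0 : E) 1 ≃ᵢ sphere (0 : E) 1 :=
  IsometryEquiv.mk'
    (fun p => ⟨(ℝ ∙ u)ᗮ.reflection p, by simp⟩)
    (fun p => ⟨(ℝ ∙ u)ᗮ.reflection p, by simp⟩)
    (fun _ => Subtype.ext (Submodule.reflection_reflection _ _))
    (Isometry.of_dist_eq fun p q => (ℝ ∙ u)ᗮ.reflection.dist_map p q)

@[simp]
lemma coe_sphereReflection (u : E) (p : sphere (0 : E) 1) :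
    (sphereReflection u p : E) = (ℝ ∙ u)ᗮ.reflection p :=
  rfl

lemma sphereReflection_sphereReflection (u : E) (p : sphere (0 : E) 1) :
    sphereReflection u (sphereReflection u p) = p :=
  (sphereReflection u).symm_apply_apply p

lemma sphereReflection_sub_left (x y : sphere (0 : E) 1) :
    sphereReflection ((x : E) - y) x = y :=
  Subtype.ext (Submodule.reflection_sub (by simp))

lemma sphereReflection_sub_right (x y : sphere (0 : E) 1) :
    sphereReflection ((x : E) - y) y = x :=
  (sphereReflection ((x : E) - y)).injective <| by
    rw [sphereReflection_sphereReflection, sphereReflection_sub_left]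

lemma coe_sphereReflection_eq_inwardPoint (u : E) {p x : sphere (0 : E) 1} {N : E} {r : ℝ}
    (h : (p : E) = inwardPoint (x : E) N r) :
    (sphereReflection u p : E) =
      inwardPoint ↑(sphereReflection u x) ((ℝ ∙ u)ᗮ.reflection N) r := by
  rw [coe_sphereReflection, h]
  exact map_inwardPoint (ℝ ∙ u)ᗮ.reflection.toLinearMap x N r

lemma sphereReflection_eq_self {u : E} {p : sphere (0 : E) 1} (h : ⟪u, p⟫ = 0) :
    sphereReflection u p = p :=
  Subtype.ext <| Submodule.reflection_mem_subspace_eq_self <|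
    Submodule.mem_orthogonal_singleton_iff_inner_right.mpr h

lemma inner_sphereReflection_sphereReflection (u : E) (p q : sphere (0 : E) 1) :
    ⟪(sphereReflection u p : E), sphereReflection u q⟫ = ⟪(p : E), q⟫ :=
  LinearIsometryEquiv.inner_map_map _ _ _

lemma inner_sphereReflection_right (u : E) (p : sphere (0 : E) 1) :
    ⟪u, sphereReflection u p⟫ = -⟪u, p⟫ := by
  have h := (ℝ ∙ u)ᗮ.reflection.inner_map_map u p
  rw [Submodule.reflection_orthogonalComplement_singleton_eq_neg, inner_neg_left] at h
  exact neg_eq_iff_eq_neg.mp h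

lemma inner_sphereReflection_le {u : E} {p q : sphere (0 : E) 1} (hp : 0 ≤ ⟪u, p⟫)
    (hq : 0 ≤ ⟪u, q⟫) : ⟪(p : E), sphereReflection u q⟫ ≤ ⟪(p : E), q⟫ := by
  rw [coe_sphereReflection, reflection_orthogonal_singleton_apply, inner_sub_right,
    inner_smul_right, real_inner_comm u]
  exact sub_le_self _ (by positivity)

/-- The polarization (two-point symmetrization) of `C` towards the half-sphere `0 ≤ ⟪u, p⟫`: of each
mirror pair with exactly one point in `C`, the point lying in that half-sphere is kept. -/
def polarization (u : E) (C : Set (sphere (0 : E) 1)) : Set (sphere (0 : E) 1) :=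
  (C ∩ sphereReflection u ⁻¹' C) ∪ ({p | 0 ≤ ⟪u, p⟫} ∩ (C ∪ sphereReflection u ⁻¹' C))

lemma mem_polarization_iff {u : E} {C : Set (sphere (0 : E) 1)} {p : sphere (0 : E) 1} :
    p ∈ polarization u C ↔ (p ∈ C ∧ sphereReflection u p ∈ C) ∨
      (0 ≤ ⟪u, p⟫ ∧ (p ∈ C ∨ sphereReflection u p ∈ C)) :=
  Iff.rfl

lemma isClosed_polarization (u : E) {C : Set (sphere (0 : E) 1)} (hC : IsClosed C) :
    IsClosed (polarization u C) := by
  have hρC : IsClosed (sphereReflection u ⁻¹' C) := hC.preimage (sphereReflection u).continuous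
  have hH : IsClosed {p : sphere (0 : E) 1 | 0 ≤ ⟪u, p⟫} :=
    isClosed_le continuous_const (by fun_prop)
  exact (hC.inter hρC).union (hH.inter (hC.union hρC))

lemma mem_and_mem_of_mem_polarization {u : E} {C : Set (sphere (0 : E) 1)}
    {p : sphere (0 : E) 1} (hp : p ∈ polarization u C) (hup : ⟪u, p⟫ ≤ 0) :
    p ∈ C ∧ sphereReflection u p ∈ C := by
  rcases hp with hp | ⟨hup', hp⟩
  · exact hp
  · have hfix := sphereReflection_eq_self (le_antisymm hup hup')
    simpa [hfix] using hp

lemma le_inner_of_mem_polarization {u : E} {C : Set (sphere (0 : E) 1)} {k : ℝ}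
    (hC : ∀ p ∈ C, ∀ q ∈ C, k ≤ ⟪(p : E), q⟫) :
    ∀ p ∈ polarization u C, ∀ q ∈ polarization u C, k ≤ ⟪(p : E), q⟫ := by
  intro p hp q hq
  have hcases : (p ∈ C ∧ q ∈ C) ∨ (sphereReflection u p ∈ C ∧ sphereReflection u q ∈ C) ∨
      ((0 ≤ ⟪u, p⟫ ∧ 0 ≤ ⟪u, q⟫) ∧
        ((p ∈ C ∧ sphereReflection u q ∈ C) ∨ (q ∈ C ∧ sphereReflection u p ∈ C))) := by
    rw [mem_polarization_iff] at hp hq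
    tauto
  rcases hcases with ⟨hpC, hqC⟩ | ⟨hpC, hqC⟩ | ⟨⟨hup, huq⟩, ⟨hpC, hqC⟩ | ⟨hqC, hpC⟩⟩
  · exact hC p hpC q hqC
  · exact inner_sphereReflection_sphereReflection u p q ▸ hC _ hpC _ hqC
  · exact (hC _ hpC _ hqC).trans (inner_sphereReflection_le hup huq)
  · rw [real_inner_comm]
    exact (hC _ hqC _ hpC).trans (inner_sphereReflection_le huq hup)

lemma measure_le_measure_polarization [MeasurableSpace E] [BorelSpace E] {u : E}
    {μ : Measure (sphere (0 : E) 1)} (hμ : MeasurePreserving (sphereReflection u) μ μ)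
    {C : Set (sphere (0 : E) 1)} (hC : IsClosed C) : μ C ≤ μ (polarization u C) := by
  have hP : MeasurableSet (polarization u C) := (isClosed_polarization u hC).measurableSet
  have hsub : C \ polarization u C ⊆ sphereReflection u ⁻¹' (polarization u C \ C) := by
    rintro p ⟨hpC, hpP⟩
    rw [mem_polarization_iff] at hpP
    push Not at hpP
    have hρp : sphereReflection u p ∉ C := hpP.1 hpC
    have hup : ⟪u, p⟫ < 0 := lt_of_not_ge fun hup => (hpP.2 hup).1 hpC
    refine ⟨Or.inr ⟨?_, Or.inr ?_⟩, hρp⟩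
    · change 0 ≤ ⟪u, sphereReflection u p⟫
      rw [inner_sphereReflection_right]
      exact neg_nonneg.mpr hup.le
    · rwa [Set.mem_preimage, sphereReflection_sphereReflection]
  calc μ C = μ (C ∩ polarization u C) + μ (C \ polarization u C) :=
        (measure_inter_add_sdiff C hP).symm
    _ ≤ μ (polarization u C ∩ C) + μ (polarization u C \ C) := by
        rw [Set.inter_comm C]
        exact add_le_add_right ((measure_mono hsub).trans_eq
          (hμ.measure_preimage (hP.diff hC.measurableSet).nullMeasurableSet)) _
    _ = μ (polarization u C) := measure_inter_add_sdiff _ hC.measurableSet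

lemma notMem_interior_polarization_of_inner_neg {u : E} {C : Set (sphere (0 : E) 1)} {k : ℝ}
    (hC : ∀ p ∈ C, ∀ q ∈ C, k ≤ ⟪(p : E), q⟫) {a b : sphere (0 : E) 1} (ha : a ∈ C) (hb : b ∈ C)
    {x : sphere (0 : E) 1} (hxa : ⟪(x : E), a⟫ ≤ k) (hxb : ⟪(x : E), sphereReflection u b⟫ ≤ k)
    {v : E} (hvx : ⟪v, x⟫ = 0) (hva : ⟪v, a⟫ < 0) (hvb : ⟪v, sphereReflection u b⟫ < 0) :
    x ∉ interior (polarization u C) := by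
  refine notMem_interior_of_forall_exists_le hvx (W := {(a : E), ↑(sphereReflection u b)})
    (Set.toFinite _) (by simp [hva, hvb, -coe_sphereReflection]) fun p hp => ?_
  have hpC : p ∈ C ∨ sphereReflection u p ∈ C := by
    rw [mem_polarization_iff] at hp
    tauto
  rcases hpC with hpC | hpC
  · exact ⟨a, by simp, hxa.trans (hC p hpC a ha)⟩
  · refine ⟨sphereReflection u b, by simp, hxb.trans ?_⟩
    rw [← inner_sphereReflection_sphereReflection u p, sphereReflection_sphereReflection]
    exact hC _ hpC b hb

lemma exists_forall_union_closedBall_le_inner {K : Set (sphere (0 : E) 1)} (hK : IsCompact K)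
    {k : ℝ} (hKk : ∀ p ∈ K, ∀ q ∈ K, k ≤ ⟪(p : E), q⟫) {x : sphere (0 : E) 1} (hx : x ∈ K)
    (hxK : ∀ w ∈ K, k < ⟪(x : E), w⟫) :
    ∃ δ > 0, ∀ p ∈ K ∪ closedBall x δ, ∀ q ∈ K ∪ closedBall x δ, k ≤ ⟪(p : E), q⟫ := by
  have hlt : ∀ w ∈ K, ∀ᶠ z : sphere (0 : E) 1 × sphere (0 : E) 1 in 𝓝 (x, w),
      k < ⟪(z.1 : E), z.2⟫ := fun w hw =>
    ContinuousAt.eventually_lt (by fun_prop) (by fun_prop) (hxK w hw)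
  have hnear : ∀ᶠ p : sphere (0 : E) 1 in 𝓝 x, ∀ w ∈ K, k < ⟪(p : E), w⟫ :=
    hK.eventually_forall_of_forall_eventually hlt
  have hxx := hlt x hx
  rw [nhds_prod_eq] at hxx
  obtain ⟨δ, hδ, hball⟩ :=
    nhds_basis_closedBall.prod_self.eventually_iff.mp ((hnear.prod_inl (𝓝 x)).and hxx)
  refine ⟨δ, hδ, ?_⟩
  rintro p (hp | hp) q (hq | hq)
  · exact hKk p hp q hq
  · rw [real_inner_comm]
    exact ((hball (Set.mk_mem_prod hq hq)).1 p hp).le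
  · exact ((hball (Set.mk_mem_prod hp hp)).1 q hq).le
  · exact (hball (Set.mk_mem_prod hp hq)).2.le

end UnitSphere

section DMaximal

variable {n : ℕ} {D : ℝ} {C : Set (Sph n)} {x y w : Sph n} {N : Esp n}

instance : (sphVol n).IsOpenPosMeasure :=
  have : Fact (finrank ℝ (Esp n) = n + 1) := ⟨by simp⟩
  isOpenPosMeasure_hausdorffMeasure_sphere

instance : IsFiniteMeasure (sphVol n) :=
  have : Fact (finrank ℝ (Esp n) = n + 1) := ⟨by simp⟩
  isFiniteMeasure_hausdorffMeasure_sphere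

lemma gd_le_iff {r : ℝ} (hr : r ∈ Set.Icc 0 Real.pi) :
    gd x y ≤ r ↔ Real.cos r ≤ ⟪(x : Esp n), y⟫ := by
  have hinner : ⟪(x : Esp n), y⟫ ∈ Set.Icc (-1 : ℝ) 1 :=
    abs_le.mp (by simpa using abs_real_inner_le_norm (x : Esp n) y)
  have hgd : gd x y ∈ Set.Icc 0 Real.pi := ⟨Real.arccos_nonneg _, Real.arccos_le_pi _⟩
  rw [← Real.strictAntiOn_cos.le_iff_ge hr hgd, gd, Real.cos_arccos hinner.1 hinner.2]

lemma sphDiam_le_iff (hD : D ∈ Set.Icc 0 Real.pi) :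
    sphDiam C ≤ D ↔ ∀ p ∈ C, ∀ q ∈ C, Real.cos D ≤ ⟪(p : Esp n), q⟫ := by
  have hbdd : BddAbove {r | ∃ p ∈ C, ∃ q ∈ C, r = gd p q} :=
    ⟨Real.pi, by rintro _ ⟨p, -, q, -, rfl⟩; exact Real.arccos_le_pi _⟩
  simp only [← gd_le_iff hD]
  constructor
  · exact fun h p hp q hq => (le_csSup hbdd ⟨p, hp, q, hq, rfl⟩).trans h
  · intro h
    refine Real.sSup_le ?_ hD.1
    rintro _ ⟨p, hp, q, hq, rfl⟩
    exact h p hp q hq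

lemma DMaximal.isCompact (hC : DMaximal n D C) : IsCompact C := hC.1

lemma DMaximal.sphDiam_le (hC : DMaximal n D C) : sphDiam C ≤ D := hC.2.1

lemma DMaximal.sphVol_le (hC : DMaximal n D C) {X : Set (Sph n)} (hX : IsCompact X)
    (hXD : sphDiam X ≤ D) : sphVol n X ≤ sphVol n C :=
  hC.2.2 ▸ le_sSup ⟨X, hX, hXD, rfl⟩

lemma DMaximal.interior_subset_of_sphDiam_union_le (hC : DMaximal n D C) {K : Set (Sph n)}
    (hK : IsCompact K) (hD : sphDiam (C ∪ K) ≤ D) : interior K ⊆ C := by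
  have hle := hC.sphVol_le (hC.isCompact.union hK) hD
  rw [← Set.union_sdiff_self, measure_union Set.disjoint_sdiff_right
    (hK.measurableSet.diff hC.isCompact.measurableSet)] at hle
  have hnull : sphVol n (K \ C) = 0 := le_zero_iff.mp <|
    (ENNReal.cancel_of_ne (measure_ne_top _ C)).add_le_iff_nonpos_right.mp hle
  have hopen : IsOpen (interior K \ C) := isOpen_interior.sdiff hC.isCompact.isClosed
  rw [← Set.sdiff_eq_empty, ← hopen.measure_eq_zero_iff (sphVol n)]
  exact measure_mono_null (Set.sdiff_subset_sdiff_left interior_subset) hnull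

lemma DMaximal.exists_inner_eq_cos (hC : DMaximal n D C) (hD : D ∈ Set.Icc 0 Real.pi)
    (hx : x ∈ C) (hxC : x ∉ interior C) : ∃ w ∈ C, ⟪(x : Esp n), w⟫ = Real.cos D := by
  have hCD := (sphDiam_le_iff hD).mp hC.sphDiam_le
  contrapose! hxC
  obtain ⟨δ, hδ, hball⟩ := exists_forall_union_closedBall_le_inner hC.isCompact hCD hx
    fun w hw => (hCD x hx w hw).lt_of_ne' (hxC w hw)
  have hsub := hC.interior_subset_of_sphDiam_union_le (isCompact_closedBall x δ)
    ((sphDiam_le_iff hD).mpr hball)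
  exact interior_maximal hsub isOpen_interior
    (mem_interior_iff_mem_nhds.mpr (closedBall_mem_nhds x hδ))

lemma dMaximal_polarization (hC : DMaximal n D C) (hD : D ∈ Set.Icc 0 Real.pi) (u : Esp n) :
    DMaximal n D (polarization u C) := by
  have hcompact : IsCompact (polarization u C) :=
    (isClosed_polarization u hC.isCompact.isClosed).isCompact
  have hdiam : sphDiam (polarization u C) ≤ D := (sphDiam_le_iff hD).mpr
    (le_inner_of_mem_polarization ((sphDiam_le_iff hD).mp hC.sphDiam_le))
  have hvol : sphVol n C ≤ sphVol n (polarization u C) :=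
    measure_le_measure_polarization ((sphereReflection u).measurePreserving_hausdorffMeasure n)
      hC.isCompact.isClosed
  exact ⟨hcompact, hdiam, (hvol.antisymm (hC.sphVol_le hcompact hdiam)).symm.trans hC.2.2⟩

lemma ExtUnitNormal.exists_sphBall_inwardPoint_subset (hN : ExtUnitNormal C x N)
    (hCD : sphDiam C ≤ D) (hD0 : 0 < D) (hDπ : D < Real.pi) :
    ∃ z : Sph n, ∃ r ∈ Set.Ioo 0 Real.pi,
      sphBall z r ⊆ C ∧ (z : Esp n) = inwardPoint (x : Esp n) N r := by
  obtain ⟨-, -, r, hr0, z, hzC, hball, -, hz⟩ := hN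
  refine ⟨z, r, ⟨hr0, lt_of_not_ge fun hr => ?_⟩, hball, hz⟩
  have hzC' : -z ∈ C := hball ((Real.arccos_le_pi _).trans hr)
  have hle : Real.cos D ≤ Real.cos Real.pi := by
    simpa using (sphDiam_le_iff ⟨hD0.le, hDπ.le⟩).mp hCD z hzC (-z) hzC'
  exact hle.not_gt (Real.cos_lt_cos_of_nonneg_of_le_pi hD0.le le_rfl hDπ)

lemma ExtUnitNormal.eq_inwardPoint (hN : ExtUnitNormal C x N) (hCD : sphDiam C ≤ D)
    (hD0 : 0 < D) (hDπ : D < Real.pi) (hw : w ∈ C) (hxw : ⟪(x : Esp n), w⟫ = Real.cos D) :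
    (w : Esp n) = inwardPoint (x : Esp n) N D := by
  have hsinD : 0 < Real.sin D := Real.sin_pos_of_pos_of_lt_pi hD0 hDπ
  obtain ⟨M, hM, hMx, hwM⟩ := exists_eq_inwardPoint (by simp) (by simp) hsinD.ne' hxw
  obtain ⟨z, r, hr, hball, hz⟩ := hN.exists_sphBall_inwardPoint_subset hCD hD0 hDπ
  obtain ⟨hN1, hNx, -⟩ := hN
  have hsinr : 0 < Real.sin r := Real.sin_pos_of_mem_Ioo hr
  rcases eq_or_ne M N with rfl | hne
  · exact hwM
  have hMN : ⟪M, N⟫ < 1 := (inner_lt_one_iff_real_of_norm_eq_one hM hN1).mpr hne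
  have hvx : ⟪M - N, x⟫ = 0 := by rw [inner_sub_left, hMx, hNx, sub_zero]
  have hvM : 0 < ⟪M - N, M⟫ := by
    rw [inner_sub_left, real_inner_comm M N, real_inner_self_eq_norm_sq, hM]
    linarith
  have hvN : ⟪M - N, N⟫ < 0 := by
    rw [inner_sub_left, real_inner_self_eq_norm_sq, hN1]
    linarith
  have hvw : ⟪M - N, w⟫ < 0 := hwM ▸ inner_inwardPoint_neg hvx hsinD hvM
  have hvz : ⟪M - N, -z⟫ < 0 := by
    rw [inner_neg_right, hz, inner_inwardPoint_of_inner_eq_zero hvx, neg_neg]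
    exact mul_neg_of_pos_of_neg hsinr hvN
  obtain ⟨γ, -, hγ⟩ := exists_curve_inner_lt x hvx
  obtain ⟨t, htw, htz⟩ := ((hγ w hvw).and (hγ (-z) hvz)).exists
  have htC : γ t ∈ C := hball <| (gd_le_iff (Set.Ioo_subset_Icc_self hr)).mpr <| by
    rw [inner_neg_right, inner_neg_right, neg_lt_neg_iff, hz,
      inner_inwardPoint_self (by simp) hNx] at htz
    exact hz ▸ htz.le
  have hle := (sphDiam_le_iff ⟨hD0.le, hDπ.le⟩).mp hCD _ htC w hw
  exact absurd (hxw ▸ htw) hle.not_gt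

lemma DMaximal.exists_inner_eq_cos_of_mem_frontier (hC : DMaximal n D C)
    (hD : D ∈ Set.Icc 0 Real.pi) (hx : x ∈ frontier C) :
    ∃ w ∈ C, ⟪(x : Esp n), w⟫ = Real.cos D :=
  hC.exists_inner_eq_cos hD (hC.isCompact.isClosed.frontier_subset hx) hx.2

lemma DMaximal.notMem_interior_polarization (hC : DMaximal n D C) (hD0 : 0 < D)
    (hDπ : D < Real.pi) (hx : x ∈ frontier C) (hy : y ∈ frontier C) {Nx Ny : Esp n}
    (hNx : ExtUnitNormal C x Nx) (hNy : ExtUnitNormal C y Ny)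
    (hne : Nx ≠ -(ℝ ∙ ((x : Esp n) - y))ᗮ.reflection Ny) :
    x ∉ interior (polarization ((x : Esp n) - y) C) := by
  have hD := Set.mem_Icc.mpr ⟨hD0.le, hDπ.le⟩
  have hsin := Real.sin_pos_of_pos_of_lt_pi hD0 hDπ
  set u : Esp n := x - y
  set M := (ℝ ∙ u)ᗮ.reflection Ny
  have hM : ‖M‖ = 1 := by rw [LinearIsometryEquiv.norm_map, hNy.1]
  have hMx : ⟪M, x⟫ = 0 := by
    rw [← sphereReflection_sub_right x y, ← hNy.2.1]
    exact (ℝ ∙ u)ᗮ.reflection.inner_map_map Ny y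
  have hNM : -1 < ⟪Nx, M⟫ := by
    have h := (inner_lt_one_iff_real_of_norm_eq_one hNx.1 ((norm_neg M).trans hM)).mpr hne
    rw [inner_neg_right] at h
    exact neg_lt.mp h
  have hvx : ⟪Nx + M, x⟫ = 0 := by rw [inner_add_left, hNx.2.1, hMx, add_zero]
  have hvN : 0 < ⟪Nx + M, Nx⟫ := by
    rw [inner_add_left, real_inner_comm Nx M, real_inner_self_eq_norm_sq, hNx.1]
    linarith
  have hvM : 0 < ⟪Nx + M, M⟫ := by
    rw [inner_add_left, real_inner_self_eq_norm_sq, hM]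
    linarith
  obtain ⟨a, ha, hxa⟩ := hC.exists_inner_eq_cos_of_mem_frontier hD hx
  obtain ⟨b, hb, hyb⟩ := hC.exists_inner_eq_cos_of_mem_frontier hD hy
  have haN := hNx.eq_inwardPoint hC.sphDiam_le hD0 hDπ ha hxa
  have hbM := coe_sphereReflection_eq_inwardPoint u
    (hNy.eq_inwardPoint hC.sphDiam_le hD0 hDπ hb hyb)
  rw [sphereReflection_sub_right] at hbM
  have hxb : ⟪(x : Esp n), sphereReflection u b⟫ = Real.cos D :=
    hbM ▸ inner_inwardPoint_self (by simp) hMx D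
  exact notMem_interior_polarization_of_inner_neg ((sphDiam_le_iff hD).mp hC.sphDiam_le) ha hb
    hxa.le hxb.le hvx (haN ▸ inner_inwardPoint_neg hvx hsin hvN)
    (hbM ▸ inner_inwardPoint_neg hvx hsin hvM)

lemma DMaximal.eq_reflection_of_mem_polarization (hC : DMaximal n D C) (hD0 : 0 < D)
    (hDπ : D < Real.pi) {Nx Ny : Esp n} (hNx : ExtUnitNormal C x Nx) (hNy : ExtUnitNormal C y Ny)
    (hy : y ∈ polarization ((x : Esp n) - y) C)
    (hw : w ∈ polarization ((x : Esp n) - y) C) (hxw : ⟪(x : Esp n), w⟫ = Real.cos D) :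
    Nx = (ℝ ∙ ((x : Esp n) - y))ᗮ.reflection Ny := by
  have hD := Set.mem_Icc.mpr ⟨hD0.le, hDπ.le⟩
  have hyw := (sphDiam_le_iff hD).mp (dMaximal_polarization hC hD _).sphDiam_le y hy w hw
  obtain ⟨hwC, hρwC⟩ := mem_and_mem_of_mem_polarization hw <| by
    rw [inner_sub_left, hxw]
    exact sub_nonpos.mpr hyw
  have hyρw : ⟪(y : Esp n), sphereReflection ((x : Esp n) - y) w⟫ = Real.cos D := by
    rw [← hxw, ← inner_sphereReflection_sphereReflection ((x : Esp n) - y) x,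
      sphereReflection_sub_left]
  have hwx := hNx.eq_inwardPoint hC.sphDiam_le hD0 hDπ hwC hxw
  have hwy := hNy.eq_inwardPoint hC.sphDiam_le hD0 hDπ hρwC hyρw
  have hwy' := coe_sphereReflection_eq_inwardPoint ((x : Esp n) - y) hwy
  rw [sphereReflection_sphereReflection, sphereReflection_sub_right] at hwy'
  exact inwardPoint_injective _ (Real.sin_pos_of_pos_of_lt_pi hD0 hDπ).ne' (hwx.symm.trans hwy')

lemma DMaximal.eq_neg_reflection_or_eq_reflection (hC : DMaximal n D C) (hD0 : 0 < D)
    (hDπ : D < Real.pi) (hx : x ∈ frontier C) (hy : y ∈ frontier C) {Nx Ny : Esp n}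
    (hNx : ExtUnitNormal C x Nx) (hNy : ExtUnitNormal C y Ny) :
    Nx = -(ℝ ∙ ((x : Esp n) - y))ᗮ.reflection Ny ∨
      Nx = (ℝ ∙ ((x : Esp n) - y))ᗮ.reflection Ny := by
  refine or_iff_not_imp_left.mpr fun hne => ?_
  have hxC := hC.isCompact.isClosed.frontier_subset hx
  have hyC := hC.isCompact.isClosed.frontier_subset hy
  have hxT : x ∈ polarization ((x : Esp n) - y) C :=
    Or.inl ⟨hxC, by rwa [Set.mem_preimage, sphereReflection_sub_left]⟩
  have hyT : y ∈ polarization ((x : Esp n) - y) C :=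
    Or.inl ⟨hyC, by rwa [Set.mem_preimage, sphereReflection_sub_right]⟩
  have hxT' := hC.notMem_interior_polarization hD0 hDπ hx hy hNx hNy hne
  have hD := Set.mem_Icc.mpr ⟨hD0.le, hDπ.le⟩
  obtain ⟨w, hw, hxw⟩ := (dMaximal_polarization hC hD _).exists_inner_eq_cos hD hxT hxT'
  exact hC.eq_reflection_of_mem_polarization hD0 hDπ hNx hNy hyT hw hxw

end DMaximal

theorem DMaximal_normals_relation_general (n : ℕ) (D : ℝ) (hD0 : 0 < D) (hDπ : D < Real.pi)
    (C : Set (Sph n)) (hC : DMaximal n D C) (x y : Sph n) (hx : x ∈ frontier C)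
    (hy : y ∈ frontier C) (Nx Ny : Esp n) (hNx : ExtUnitNormal C x Nx)
    (hNy : ExtUnitNormal C y Ny) :
    ∃ η : ℝ, (η = -1 ∨ η = 1) ∧
      ∃ lam : ℝ, Nx - η • Ny = lam • ((x : Esp n) - (y : Esp n)) := by
  set c := 2 * (⟪(x : Esp n) - y, Ny⟫ / ‖(x : Esp n) - y‖ ^ 2)
  have hrefl := reflection_orthogonal_singleton_apply ((x : Esp n) - y) Ny
  rcases hC.eq_neg_reflection_or_eq_reflection hD0 hDπ hx hy hNx hNy with h | h
  · exact ⟨-1, .inl rfl, c, by rw [h, hrefl]; module⟩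
  · exact ⟨1, .inr rfl, -c, by rw [h, hrefl]; module⟩

/-- at two distinct strongly regular boundary points of a solid
`D`-maximal set (`π/2 < D < π`), the exterior unit normals satisfy
`N_x − η·N_y = λ·(x − y)` for some sign `η` and some `λ ∈ ℝ`. -/
theorem DMaximal_normals_relation (n : ℕ) (hn : 2 ≤ n) (D : ℝ)
    (hD0 : Real.pi / 2 < D) (hD1 : D < Real.pi) (C : Set (Sph n))
    (hC : DMaximal n D C) (hCsolid : Solid C) (x y : Sph n) (hxy : x ≠ y)
    (hx : StronglyRegular C x) (hy : StronglyRegular C y)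
    (Nx Ny : Esp n) (hNx : ExtUnitNormal C x Nx) (hNy : ExtUnitNormal C y Ny) :
    ∃ η : ℝ, (η = -1 ∨ η = 1) ∧
      ∃ lam : ℝ, Nx - η • Ny = lam • ((x : Esp n) - (y : Esp n)) := by
  have hD : 0 < D := Real.pi_div_two_pos.trans hD0
  exact DMaximal_normals_relation_general n D hD hD1 C hC x y hx.1 hy.1 Nx Ny hNx hNy
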